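/- For every dimension N ≥ 1, every degree k ∈ ℕ, every s ∈ {1, …, k+1}, every p ∈ [1, +∞], and every ρ > 0, there exists a constant C > 0 depending only on N, ρ, k, s and p such that: for every open bounded set U ⊆ ℝ^N with diameter h_U which is star-shaped with respect to a ball of radius ρ·h_U and every function v smooth on an open neighbourhood of the closure of U, one has |π_U^k v|_{W^{s,p}(U)} ≤ C · |v|_{W^{s,p}(U)}, where π_U^k v is the L^2-projection of v onto polynomials of total degree at most k. -/

import Mathlib

open MeasureTheory Metric Set
open scoped ENNReal

noncomputable section

/-- `w : ℝ^N → ℝ` is (given by) a multivariate polynomial of total degree at most `k`. -/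
def IsPolyDegLE (N k : ℕ) (w : EuclideanSpace ℝ (Fin N) → ℝ) : Prop :=
  ∃ P : MvPolynomial (Fin N) ℝ, P.totalDegree ≤ k ∧ ∀ x, w x = MvPolynomial.eval (fun i => x i) P

/-- `U` is star-shaped with respect to a ball of radius `ρ * diam U`. -/
def StarShapedWrtBall {N : ℕ} (ρ : ℝ) (U : Set (EuclideanSpace ℝ (Fin N))) : Prop :=
  ∃ c, Metric.ball c (ρ * Metric.diam U) ⊆ U ∧
    ∀ x ∈ Metric.ball c (ρ * Metric.diam U), ∀ y ∈ U, segment ℝ x y ⊆ U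

/-- The `W^{m,p}(U)`-seminorm of `v`: the `L^p(U)`-norm of the norm of the `m`-th iterated
derivative. -/
def sobSemi {N : ℕ} (m : ℕ) (p : ℝ≥0∞) (U : Set (EuclideanSpace ℝ (Fin N)))
    (v : EuclideanSpace ℝ (Fin N) → ℝ) : ℝ≥0∞ :=
  eLpNorm (fun x => ‖iteratedFDeriv ℝ m v x‖) p (volume.restrict U)


open Nat in
/-- The Taylor polynomial of order `n` of `v` at `y`. -/
def taylorPoly {N : ℕ} (n : ℕ) (v : EuclideanSpace ℝ (Fin N) → ℝ) (y x : EuclideanSpace ℝ (Fin N)) :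
    ℝ :=
  ∑ j ∈ Finset.range (n + 1), (j ! : ℝ)⁻¹ • (iteratedFDeriv ℝ j v y (fun _ ↦ x - y))

lemma iteratedFDeriv_eq_zero_of_finite {E : Type} [NormedAddCommGroup E] [NormedSpace ℝ E]
    (n : ℕ) : ∀ {F : Type} [NormedAddCommGroup F] [NormedSpace ℝ F] (f : E → F)
    (p : FormalMultilinearSeries ℝ E F) (x : E),
    HasFiniteFPowerSeriesOnBall f p x n ⊤ → iteratedFDeriv ℝ n f = 0 := by
  induction n with
  | zero =>
    intro F _ _ f p x h
    have h0 : f = 0 := by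
      ext z
      exact h.eq_zero_of_bound_zero z (by simp)
    subst h0
    ext z
    simp
  | succ n ih =>
    intro F _ _ f p x h
    have := ih _ _ _ h.fderiv
    ext z
    rw [iteratedFDeriv_succ_eq_comp_right, this]
    simp

lemma taylorPoly_iteratedFDeriv {N : ℕ} (n : ℕ) (v : EuclideanSpace ℝ (Fin N) → ℝ)
    (y : EuclideanSpace ℝ (Fin N)) : iteratedFDeriv ℝ (n + 1) (taylorPoly n v y) = 0 := by
  apply iteratedFDeriv_eq_zero_of_finite (n + 1) _
    (fun j => if j < n + 1 then ((Nat.factorial j : ℝ)⁻¹ • iteratedFDeriv ℝ j v y) else 0) y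
  apply HasFiniteFPowerSeriesOnBall.mk'
  · intro m hm
    simp [not_lt.mpr hm]
  · simp
  · intro z _
    unfold taylorPoly
    apply Finset.sum_congr rfl
    intro j hj
    rw [if_pos (Finset.mem_range.mp hj)]
    simp

lemma isPoly_add {N k : ℕ} {f g : EuclideanSpace ℝ (Fin N) → ℝ} (hf : IsPolyDegLE N k f)
    (hg : IsPolyDegLE N k g) : IsPolyDegLE N k (fun x => f x + g x) := by
  obtain ⟨P, hP, hP'⟩ := hf
  obtain ⟨Q, hQ, hQ'⟩ := hg
  exact ⟨P + Q, (MvPolynomial.totalDegree_add _ _).trans (max_le hP hQ), fun x => by simp [hP', hQ']⟩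

lemma isPoly_sub {N k : ℕ} {f g : EuclideanSpace ℝ (Fin N) → ℝ} (hf : IsPolyDegLE N k f)
    (hg : IsPolyDegLE N k g) : IsPolyDegLE N k (fun x => f x - g x) := by
  obtain ⟨P, hP, hP'⟩ := hf
  obtain ⟨Q, hQ, hQ'⟩ := hg
  exact ⟨P - Q, (MvPolynomial.totalDegree_sub _ _).trans (max_le hP hQ), fun x => by simp [hP', hQ']⟩

lemma isPoly_sum {N k : ℕ} {ι : Type*} (s : Finset ι) (f : ι → EuclideanSpace ℝ (Fin N) → ℝ)
    (hf : ∀ i ∈ s, IsPolyDegLE N k (f i)) : IsPolyDegLE N k (fun x => ∑ i ∈ s, f i x) := by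
  classical
  induction s using Finset.induction_on with
  | empty => exact ⟨0, by simp, by simp⟩
  | insert a s ha ih =>
    simp only [Finset.sum_insert ha]
    exact isPoly_add (hf a (by simp)) (ih fun i hi => hf i (by simp [hi]))

lemma isPoly_mono {N k l : ℕ} (hkl : k ≤ l) {f : EuclideanSpace ℝ (Fin N) → ℝ}
    (hf : IsPolyDegLE N k f) : IsPolyDegLE N l f := by
  obtain ⟨P, hP, hP'⟩ := hf
  exact ⟨P, hP.trans hkl, hP'⟩

lemma isPoly_multilinear {N j : ℕ} (c : ℝ) (y : EuclideanSpace ℝ (Fin N))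
    (f : ContinuousMultilinearMap ℝ (fun _ : Fin j => EuclideanSpace ℝ (Fin N)) ℝ) :
    IsPolyDegLE N j (fun x => c • f (fun _ => x - y)) := by
  have key : ∀ x : EuclideanSpace ℝ (Fin N), c • f (fun _ => x - y) =
      ∑ r : Fin j → Fin N, c * ((∏ i, (x (r i) - y (r i))) *
        f (fun i => EuclideanSpace.basisFun (Fin N) ℝ (r i))) := by
    intro x
    have hx : (fun _ : Fin j => x - y) = fun _ : Fin j => ∑ i : Fin N, (x i - y i) •
        EuclideanSpace.basisFun (Fin N) ℝ i := by
      ext1 _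
      have := (EuclideanSpace.basisFun (Fin N) ℝ).sum_repr (x - y)
      simpa using this.symm
    rw [hx, f.map_sum, smul_eq_mul, Finset.mul_sum]
    refine Finset.sum_congr rfl fun r _ => ?_
    rw [f.map_smul_univ, smul_eq_mul]
  simp only [key]
  apply isPoly_sum
  intro r _
  refine ⟨MvPolynomial.C c * ((∏ i, (MvPolynomial.X (r i) - MvPolynomial.C (y (r i)))) *
    MvPolynomial.C (f (fun i => EuclideanSpace.basisFun (Fin N) ℝ (r i)))), ?_, ?_⟩
  · refine (MvPolynomial.totalDegree_mul _ _).trans ?_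
    rw [MvPolynomial.totalDegree_C, zero_add]
    refine (MvPolynomial.totalDegree_mul _ _).trans ?_
    rw [MvPolynomial.totalDegree_C, add_zero]
    refine (MvPolynomial.totalDegree_finsetProd _ _).trans ?_
    refine (Finset.sum_le_card_nsmul _ _ 1 ?_).trans (by simp)
    intro i _
    refine (MvPolynomial.totalDegree_sub _ _).trans ?_
    simp
  · intro x
    simp

lemma taylorPoly_isPoly {N : ℕ} (n : ℕ) (v : EuclideanSpace ℝ (Fin N) → ℝ)
    (y : EuclideanSpace ℝ (Fin N)) : IsPolyDegLE N n (taylorPoly n v y) := by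
  unfold taylorPoly
  apply isPoly_sum
  intro j hj
  exact isPoly_mono (Nat.lt_succ_iff.mp (Finset.mem_range.mp hj)) (isPoly_multilinear _ _ _)

lemma isPoly_contDiff {N k : ℕ} {f : EuclideanSpace ℝ (Fin N) → ℝ} (hf : IsPolyDegLE N k f)
    {n : WithTop ℕ∞} : ContDiff ℝ n f := by
  obtain ⟨P, -, hP⟩ := hf
  have : f = fun x : EuclideanSpace ℝ (Fin N) => MvPolynomial.eval (fun i => x i) P := funext hP
  rw [this]
  clear this hP f
  induction P using MvPolynomial.induction_on with
  | C a => simpa using contDiff_const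
  | add p q hp hq => simpa using hp.add hq
  | mul_X p i hp =>
    simp only [map_mul, MvPolynomial.eval_X]
    exact hp.mul (by fun_prop)

/-- Affine rescaling of a polynomial. -/
lemma isPoly_affine {N k : ℕ} {f : EuclideanSpace ℝ (Fin N) → ℝ} (hf : IsPolyDegLE N k f)
    (c : EuclideanSpace ℝ (Fin N)) (h : ℝ) : IsPolyDegLE N k (fun x => f (c + h • x)) := by
  obtain ⟨P, hPd, hP⟩ := hf
  refine ⟨MvPolynomial.aeval (fun i => MvPolynomial.C (c i) + MvPolynomial.C h * MvPolynomial.X i) P,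
    ?_, ?_⟩
  · refine le_trans ?_ hPd
    rw [MvPolynomial.aeval_def, MvPolynomial.eval₂_eq]
    refine MvPolynomial.totalDegree_finsetSum_le ?_
    intro d hd
    refine (MvPolynomial.totalDegree_mul _ _).trans ?_
    simp only [MvPolynomial.algebraMap_eq, MvPolynomial.totalDegree_C, zero_add]
    refine (MvPolynomial.totalDegree_finsetProd _ _).trans ?_
    refine le_trans ?_ (MvPolynomial.le_totalDegree hd)
    rw [Finsupp.sum]
    refine Finset.sum_le_sum fun i _ => ?_
    refine (MvPolynomial.totalDegree_pow _ _).trans ?_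
    refine (Nat.mul_le_mul_left _ (?_ : _ ≤ 1)).trans (by simp)
    refine (MvPolynomial.totalDegree_add _ _).trans ?_
    refine max_le (by simp) ?_
    refine (MvPolynomial.totalDegree_mul _ _).trans (by simp)
  · intro x
    change f (c + h • x) = _
    have := MvPolynomial.comp_aeval_apply (R := ℝ)
      (fun i => MvPolynomial.C (c i) + MvPolynomial.C h * MvPolynomial.X i)
      (MvPolynomial.aeval (R := ℝ) (fun i => x i)) P
    rw [hP]
    refine Eq.trans ?_ this.symm
    simp [MvPolynomial.aeval_eq_eval]

lemma finite_dim_bound {V X Y : Type*} [AddCommGroup V] [Module ℝ V] [Module.Finite ℝ V]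
    [NormedAddCommGroup X] [NormedSpace ℝ X] [NormedAddCommGroup Y] [NormedSpace ℝ Y]
    (f : V →ₗ[ℝ] X) (g : V →ₗ[ℝ] Y) (hg : Function.Injective g) :
    ∃ C : ℝ, 0 < C ∧ ∀ v, ‖f v‖ ≤ C * ‖g v‖ := by
  let e := LinearEquiv.ofInjective g hg
  let T : LinearMap.range g →L[ℝ] X := LinearMap.toContinuousLinearMap (f ∘ₗ e.symm.toLinearMap)
  refine ⟨‖T‖ + 1, by positivity, fun v => ?_⟩
  have h1 : T (e v) = f v := by simp [T]
  have h2 : ‖e v‖ = ‖g v‖ := rfl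
  rw [← h1, ← h2]
  refine (T.le_opNorm _).trans ?_
  gcongr
  linarith

lemma cont_memLp_ball {N : ℕ} (r : ℝ) {f : EuclideanSpace ℝ (Fin N) → ℝ} (hf : Continuous f) :
    MemLp f 2 (volume.restrict (ball 0 r)) := by
  obtain ⟨C, hC⟩ := (isCompact_closedBall (0 : EuclideanSpace ℝ (Fin N)) r).exists_bound_of_continuousOn
    hf.continuousOn
  have : IsFiniteMeasure (volume.restrict (ball (0 : EuclideanSpace ℝ (Fin N)) r)) :=
    ⟨by simpa using measure_ball_lt_top⟩
  refine MemLp.of_bound hf.aestronglyMeasurable C ?_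
  filter_upwards [ae_restrict_mem measurableSet_ball] with x hx using hC x (ball_subset_closedBall hx)

lemma isPoly_eval {N k : ℕ} (P : MvPolynomial.restrictTotalDegree (Fin N) ℝ k) :
    IsPolyDegLE N k (fun x => MvPolynomial.eval (fun i => x i) (P : MvPolynomial (Fin N) ℝ)) :=
  ⟨P, (MvPolynomial.mem_restrictTotalDegree _ _ _).mp P.2, fun _ => rfl⟩

lemma ref_bound (N k j : ℕ) (r : ℝ) (hr : 0 < r) : ∃ C : ℝ, 0 < C ∧
    ∀ q : EuclideanSpace ℝ (Fin N) → ℝ, IsPolyDegLE N k q → ∀ x ∈ closedBall 0 1,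
      ‖iteratedFDeriv ℝ j q x‖ ≤ C * √(∫ x in ball 0 r, q x * q x) := by
  classical
  let V := MvPolynomial.restrictTotalDegree (Fin N) ℝ k
  let ev : V → EuclideanSpace ℝ (Fin N) → ℝ :=
    fun P x => MvPolynomial.eval (fun i => x i) (P : MvPolynomial (Fin N) ℝ)
  have hev : ∀ P, IsPolyDegLE N k (ev P) := isPoly_eval
  have hadd : ∀ P Q, ev (P + Q) = ev P + ev Q := by intro P Q; ext x; simp [ev]
  have hsmul : ∀ (c : ℝ) P, ev (c • P) = c • ev P := by intro P Q; ext x; simp [ev]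
  have hcd : ∀ P, ContDiff ℝ j (ev P) := fun P => isPoly_contDiff (hev P)
  have hco : ∀ P, Continuous (ev P) := fun P => (isPoly_contDiff (n := 0) (hev P)).continuous
  have : CompactSpace (closedBall (0 : EuclideanSpace ℝ (Fin N)) 1) :=
    isCompact_iff_compactSpace.mp (isCompact_closedBall _ _)
  let f : V →ₗ[ℝ] C(closedBall (0 : EuclideanSpace ℝ (Fin N)) 1,
      ContinuousMultilinearMap ℝ (fun _ : Fin j => EuclideanSpace ℝ (Fin N)) ℝ) :=
    { toFun := fun P => ⟨fun x => iteratedFDeriv ℝ j (ev P) x,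
        ((hcd P).continuous_iteratedFDeriv le_rfl).comp continuous_subtype_val⟩
      map_add' := by
        intro P Q
        ext1 x
        simp only [ContinuousMap.coe_mk, ContinuousMap.add_apply, hadd]
        exact iteratedFDeriv_add_apply (hcd P).contDiffAt (hcd Q).contDiffAt
      map_smul' := by
        intro c P
        ext1 x
        simp only [ContinuousMap.coe_mk, ContinuousMap.smul_apply, hsmul, RingHom.id_apply]
        exact iteratedFDeriv_const_smul_apply (hcd P).contDiffAt }
  let g : V →ₗ[ℝ] Lp ℝ 2 (volume.restrict (ball (0 : EuclideanSpace ℝ (Fin N)) r)) :=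
    { toFun := fun P => (cont_memLp_ball r (hco P)).toLp (ev P)
      map_add' := by
        intro P Q
        rw [← MemLp.toLp_add]
        simp only [hadd]
      map_smul' := by
        intro c P
        simp only [RingHom.id_apply]
        rw [← MemLp.toLp_const_smul]
        simp only [hsmul] }
  have hg : Function.Injective g := by
    rw [injective_iff_map_eq_zero]
    intro P hP
    have h0 : ev P =ᵐ[volume.restrict (ball 0 r)] 0 := by
      have h := (cont_memLp_ball r (hco P)).coeFn_toLp
      have h' : (cont_memLp_ball r (hco P)).toLp (ev P) = 0 := hP
      rw [h'] at h
      exact h.symm.trans (Lp.coeFn_zero _ _ _)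
    have h1 : ∀ x ∈ ball (0 : EuclideanSpace ℝ (Fin N)) r, ev P x = 0 :=
      Measure.eqOn_open_of_ae_eq h0 isOpen_ball (hco P).continuousOn continuousOn_const
    have h2 : AnalyticOnNhd ℝ (ev P) univ := by
      have := (isPoly_contDiff (n := ⊤) (hev P))
      exact (contDiff_omega_iff_analyticOnNhd).mp this
    have h3 : ev P = 0 := by
      refine h2.eq_of_eventuallyEq (z₀ := 0) (fun x _ => analyticAt_const) ?_
      filter_upwards [isOpen_ball.mem_nhds (mem_ball_self hr)] with x hx using h1 x hx
    apply Subtype.ext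
    apply MvPolynomial.funext
    intro x
    have := congrFun h3 (WithLp.toLp 2 x)
    simpa [ev] using this
  obtain ⟨C, hC, hb⟩ := finite_dim_bound (V := V)
    (X := C(closedBall (0 : EuclideanSpace ℝ (Fin N)) 1,
      ContinuousMultilinearMap ℝ (fun _ : Fin j => EuclideanSpace ℝ (Fin N)) ℝ)) f g hg
  refine ⟨C, hC, ?_⟩
  rintro q ⟨P, hPd, hP⟩ x hx
  let P' : V := ⟨P, (MvPolynomial.mem_restrictTotalDegree _ _ _).mpr hPd⟩
  have hq : q = ev P' := funext hP
  have hn : ‖g P'‖ = √(∫ x in ball 0 r, q x * q x) := by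
    have h4 : ‖g P'‖ ^ 2 = ∫ x in ball 0 r, q x * q x := by
      rw [← real_inner_self_eq_norm_sq, L2.inner_def]
      apply integral_congr_ae
      filter_upwards [(cont_memLp_ball r (hco P')).coeFn_toLp] with x hx
      have : (g P') x = q x := by rw [hq]; exact hx
      simp [this, sq]
    rw [← h4, Real.sqrt_sq (norm_nonneg _)]
  rw [← hn]
  refine le_trans ?_ (hb P')
  rw [hq]
  exact ContinuousMap.norm_coe_le_norm (f P') ⟨x, hx⟩

open Pointwise in
lemma setIntegral_ball_scale {N : ℕ} (f : EuclideanSpace ℝ (Fin N) → ℝ)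
    (c : EuclideanSpace ℝ (Fin N)) (h r : ℝ) (hh : 0 < h) :
    ∫ z in ball 0 r, f (c + h • z) = (h ^ N)⁻¹ * ∫ x in ball c (r * h), f x := by
  rw [Measure.setIntegral_comp_smul volume (fun z => f (c + z)) _ hh.ne']
  rw [finrank_euclideanSpace, Fintype.card_fin, abs_of_pos (by positivity), smul_eq_mul]
  congr 1
  have hpre : h • ball (0 : EuclideanSpace ℝ (Fin N)) r = (fun z => c + z) ⁻¹' (ball c (r * h)) := by
    rw [_root_.smul_ball hh.ne', smul_zero, Real.norm_of_nonneg hh.le, mul_comm]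
    ext z
    simp
  rw [hpre]
  exact (measurePreserving_add_left volume c).setIntegral_preimage_emb
    (measurableEmbedding_addLeft c) f _

lemma proj_bound (N k s : ℕ) (ρ : ℝ) (hρ : 0 < ρ) : ∃ C : ℝ, 0 < C ∧
    ∀ (c : EuclideanSpace ℝ (Fin N)) (h : ℝ), 0 < h → ∀ U : Set (EuclideanSpace ℝ (Fin N)),
      MeasurableSet U → ball c (ρ * h) ⊆ U → U ⊆ closedBall c h →
      ∀ q : EuclideanSpace ℝ (Fin N) → ℝ, IsPolyDegLE N k q →
      ∀ g : EuclideanSpace ℝ (Fin N) → ℝ, IntegrableOn g U →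
      (∫ x in U, q x * q x = ∫ x in U, g x * q x) →
      ∀ x ∈ U, ‖iteratedFDeriv ℝ s q x‖ ≤ C * (h ^ s)⁻¹ * (h ^ N)⁻¹ * ∫ x in U, ‖g x‖ := by
  obtain ⟨C0, hC0, hb0⟩ := ref_bound N k 0 ρ hρ
  obtain ⟨C1, hC1, hb1⟩ := ref_bound N k s ρ hρ
  refine ⟨C1 * C0, by positivity, ?_⟩
  intro c h hh U hUm hBU hUB q hq g hg hproj x hx
  have hq' := isPoly_affine hq c h
  set J := ∫ z in ball (0 : EuclideanSpace ℝ (Fin N)) ρ, q (c + h • z) * q (c + h • z) with hJ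
  have hJ0 : 0 ≤ J := integral_nonneg fun z => mul_self_nonneg _
  have hqc : Continuous q := (isPoly_contDiff (n := 0) hq).continuous
  have hpt : ∀ x ∈ U, ∃ z ∈ closedBall (0 : EuclideanSpace ℝ (Fin N)) 1, x = c + h • z := by
    intro x hx
    refine ⟨h⁻¹ • (x - c), ?_, ?_⟩
    · have := hUB hx
      rw [mem_closedBall, dist_eq_norm] at this
      rw [mem_closedBall, dist_zero_right, norm_smul, norm_inv, Real.norm_of_nonneg hh.le]
      rw [inv_mul_le_iff₀ hh]
      linarith
    · rw [smul_smul, mul_inv_cancel₀ hh.ne', one_smul]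
      abel
  have hsup : ∀ x ∈ U, ‖q x‖ ≤ C0 * √J := by
    intro x hx
    obtain ⟨z, hz, rfl⟩ := hpt x hx
    have := hb0 _ hq' z hz
    rwa [norm_iteratedFDeriv_zero] at this
  have hder : ‖iteratedFDeriv ℝ s q x‖ ≤ C1 * √J * (h ^ s)⁻¹ := by
    obtain ⟨z, hz, rfl⟩ := hpt x hx
    have := hb1 _ hq' z hz
    have hcd : ContDiff ℝ s (fun y => q (c + y)) := (isPoly_contDiff hq).comp (by fun_prop)
    rw [iteratedFDeriv_comp_const_smul h hcd] at this
    simp only [iteratedFDeriv_comp_add_left] at this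
    rw [norm_smul, norm_pow, Real.norm_of_nonneg hh.le] at this
    rw [le_mul_inv_iff₀ (by positivity), mul_comm]
    exact this
  have hJle : J ≤ (h ^ N)⁻¹ * (C0 * √J * ∫ x in U, ‖g x‖) := by
    refine le_trans (le_of_eq (setIntegral_ball_scale (fun x => q x * q x) c h ρ hh)) ?_
    gcongr
    have hint : IntegrableOn (fun x => q x * q x) U :=
      ((hqc.mul hqc).continuousOn.integrableOn_compact (isCompact_closedBall c h)).mono_set hUB
    calc ∫ x in ball c (ρ * h), q x * q x ≤ ∫ x in U, q x * q x :=
          setIntegral_mono_set hint (Filter.Eventually.of_forall fun x => mul_self_nonneg _)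
            (Filter.Eventually.of_forall hBU)
      _ = ∫ x in U, g x * q x := hproj
      _ ≤ ∫ x in U, C0 * √J * ‖g x‖ := by
          refine (le_abs_self _).trans ?_
          rw [← Real.norm_eq_abs]
          refine norm_integral_le_of_norm_le (hg.norm.const_mul _) ?_
          filter_upwards [ae_restrict_mem hUm] with x hx
          rw [norm_mul, mul_comm]
          gcongr
          exact hsup x hx
      _ = C0 * √J * ∫ x in U, ‖g x‖ := integral_const_mul _ _
  have hG : 0 ≤ ∫ x in U, ‖g x‖ := integral_nonneg fun z => norm_nonneg _
  have hs : √J ≤ C0 * (h ^ N)⁻¹ * ∫ x in U, ‖g x‖ := by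
    rcases (Real.sqrt_nonneg J).eq_or_lt with h0 | h0
    · rw [← h0]; positivity
    · refine le_of_mul_le_mul_left ?_ h0
      calc √J * √J = J := Real.mul_self_sqrt hJ0
        _ ≤ _ := hJle
        _ = _ := by ring
  calc _ ≤ _ := hder
    _ ≤ C1 * (C0 * (h ^ N)⁻¹ * ∫ x in U, ‖g x‖) * (h ^ s)⁻¹ := by gcongr
    _ = _ := by ring

lemma lintegral_affine {N : ℕ} (F : EuclideanSpace ℝ (Fin N) → ℝ≥0∞) (hF : Measurable F)
    (a : EuclideanSpace ℝ (Fin N)) (r : ℝ) (hr : 1 / 2 ≤ r) :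
    ∫⁻ x, F (a + r • x) ≤ 2 ^ N * ∫⁻ x, F x := by
  have hr0 : r ≠ 0 := by linarith
  have h1 : ∫⁻ x, F (a + r • x) = ∫⁻ x, F (a + x) ∂(Measure.map (r • ·) volume) := by
    rw [lintegral_map (by fun_prop) (by fun_prop)]
  rw [h1, Measure.map_addHaar_smul volume hr0, lintegral_smul_measure,
    lintegral_add_left_eq_self, finrank_euclideanSpace, Fintype.card_fin, smul_eq_mul]
  gcongr
  rw [show (2 : ℝ≥0∞) ^ N = ENNReal.ofReal (2 ^ N) by rw [ENNReal.ofReal_pow (by norm_num)]; simp]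
  apply ENNReal.ofReal_le_ofReal
  rw [abs_of_nonneg (by positivity), ← inv_pow]
  gcongr
  rw [inv_le_comm₀ (by linarith) (by norm_num)]
  linarith

lemma double_bound {N : ℕ} (F : EuclideanSpace ℝ (Fin N) → ℝ≥0∞) (hF : Measurable F)
    (B U : Set (EuclideanSpace ℝ (Fin N))) (t : ℝ) :
    ∫⁻ y in B, ∫⁻ x in U, F (y + t • (x - y)) ≤
      2 ^ N * (volume B + volume U) * ∫⁻ x, F x := by
  rcases le_total (1 / 2) t with ht | ht
  · calc ∫⁻ y in B, ∫⁻ x in U, F (y + t • (x - y))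
        ≤ ∫⁻ y in B, 2 ^ N * ∫⁻ x, F x := by
          refine lintegral_mono fun y => ?_
          refine (setLIntegral_le_lintegral _ _).trans ?_
          have := lintegral_affine F hF ((1 - t) • y) t ht
          refine le_trans (le_of_eq ?_) this
          congr 1; ext x; congr 1; module
      _ = 2 ^ N * volume B * ∫⁻ x, F x := by
          rw [setLIntegral_const]; ring
      _ ≤ _ := by gcongr; exact le_self_add
  · rw [lintegral_lintegral_swap (by fun_prop)]
    calc ∫⁻ x in U, ∫⁻ y in B, F (y + t • (x - y))
        ≤ ∫⁻ x in U, 2 ^ N * ∫⁻ x, F x := by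
          refine lintegral_mono fun x => ?_
          refine (setLIntegral_le_lintegral _ _).trans ?_
          have := lintegral_affine F hF (t • x) (1 - t) (by linarith)
          refine le_trans (le_of_eq ?_) this
          congr 1; ext x; congr 1; module
      _ = 2 ^ N * volume U * ∫⁻ x, F x := by
          rw [setLIntegral_const]; ring
      _ ≤ _ := by gcongr; exact le_add_self

lemma taylor_pointwise {N : ℕ} (n : ℕ) (v : EuclideanSpace ℝ (Fin N) → ℝ)
    (hv : ContDiff ℝ (n + 1) v) (h : ℝ) (x y : EuclideanSpace ℝ (Fin N)) (hxy : dist x y ≤ h) :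
    ‖v x - taylorPoly n v y x‖ₑ ≤ ENNReal.ofReal (h ^ (n + 1)) *
      ∫⁻ t in Ioc (0 : ℝ) 1, ‖iteratedFDeriv ℝ (n + 1) v (y + t • (x - y))‖ₑ := by
  have hT := map_add_eq_sum_add_integral_iteratedFDeriv (f := v) (x := y) (y := x - y) (n := n)
    (fun t _ => hv.contDiffAt)
  have hh : 0 ≤ h := dist_nonneg.trans hxy
  rw [add_sub_cancel] at hT
  have hsub : v x - taylorPoly n v y x = ((Nat.factorial n : ℝ)⁻¹ • ∫ t in 0..1, (1 - t)^n •
      iteratedFDeriv ℝ (n + 1) v (y + t • (x - y)) (fun _ ↦ x - y)) := by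
    rw [hT]; unfold taylorPoly; ring
  rw [hsub, enorm_smul, intervalIntegral.integral_of_le zero_le_one]
  have hf1 : ‖(Nat.factorial n : ℝ)⁻¹‖ₑ ≤ 1 := by
    rw [← ofReal_norm, norm_inv, Real.norm_natCast]
    rw [ENNReal.ofReal_le_one]
    exact inv_le_one_of_one_le₀ (by exact_mod_cast Nat.factorial_pos n)
  refine (mul_le_of_le_one_left' hf1).trans ?_
  refine (enorm_integral_le_lintegral_enorm _).trans ?_
  rw [← lintegral_const_mul' _ _ ENNReal.ofReal_ne_top]
  refine setLIntegral_mono' measurableSet_Ioc fun t ht => ?_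
  rw [← ofReal_norm, ← ofReal_norm, ← ENNReal.ofReal_mul (by positivity)]
  apply ENNReal.ofReal_le_ofReal
  rw [norm_smul, norm_pow]
  have h1 : ‖1 - t‖ ^ n ≤ 1 := by
    apply pow_le_one₀ (norm_nonneg _)
    rw [Real.norm_eq_abs, abs_le]
    constructor <;> linarith [ht.1, ht.2]
  have h2 := (iteratedFDeriv ℝ (n + 1) v (y + t • (x - y))).le_opNorm (fun _ ↦ x - y)
  rw [Finset.prod_const, Finset.card_univ, Fintype.card_fin] at h2
  calc _ ≤ 1 * ‖(iteratedFDeriv ℝ (n + 1) v (y + t • (x - y))) fun x_1 ↦ x - y‖ := by gcongr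
    _ ≤ ‖iteratedFDeriv ℝ (n + 1) v (y + t • (x - y))‖ * ‖x - y‖ ^ (n + 1) := by rw [one_mul]; exact h2
    _ ≤ ‖iteratedFDeriv ℝ (n + 1) v (y + t • (x - y))‖ * h ^ (n + 1) := by
        rw [← dist_eq_norm]
        gcongr
    _ = _ := mul_comm _ _

lemma taylor_L1 {N : ℕ} (n : ℕ) (v : EuclideanSpace ℝ (Fin N) → ℝ)
    (hv : ContDiff ℝ (n + 1) v) (h : ℝ) (B U : Set (EuclideanSpace ℝ (Fin N)))
    (hU : MeasurableSet U) (hB0 : volume B ≠ 0) (hBt : volume B ≠ ⊤)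
    (hd : ∀ x ∈ U, ∀ y ∈ B, dist x y ≤ h)
    (hstar : ∀ y ∈ B, ∀ x ∈ U, segment ℝ y x ⊆ U) :
    ∃ y ∈ B, ∫⁻ x in U, ‖v x - taylorPoly n v y x‖ₑ ≤ ENNReal.ofReal (h ^ (n + 1)) *
      (2 ^ N * (volume B + volume U) * (∫⁻ x in U, ‖iteratedFDeriv ℝ (n + 1) v x‖ₑ) / volume B) := by
  set F : EuclideanSpace ℝ (Fin N) → ℝ≥0∞ :=
    U.indicator (fun x => ‖iteratedFDeriv ℝ (n + 1) v x‖ₑ) with hFdef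
  have hF : Measurable F :=
    ((hv.continuous_iteratedFDeriv le_rfl).enorm.measurable).indicator hU
  have hFi : ∫⁻ x, F x = ∫⁻ x in U, ‖iteratedFDeriv ℝ (n + 1) v x‖ₑ := lintegral_indicator hU _
  set H : EuclideanSpace ℝ (Fin N) → ℝ≥0∞ :=
    fun y => ∫⁻ t in Ioc (0 : ℝ) 1, ∫⁻ x in U, F (y + t • (x - y)) with hH
  have hm1 : Measurable (fun z : EuclideanSpace ℝ (Fin N) × ℝ =>
      ∫⁻ x in U, F (z.1 + z.2 • (x - z.1))) := by
    apply Measurable.lintegral_prod_right' (f := fun w : (EuclideanSpace ℝ (Fin N) × ℝ) ×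
      EuclideanSpace ℝ (Fin N) => F (w.1.1 + w.1.2 • (w.2 - w.1.1)))
    fun_prop
  have hHm : Measurable H := by
    apply Measurable.lintegral_prod_right' (f := fun z : EuclideanSpace ℝ (Fin N) × ℝ =>
      ∫⁻ x in U, F (z.1 + z.2 • (x - z.1)))
    exact hm1
  obtain ⟨y, hy, hle⟩ := exists_le_setLAverage hB0 hBt hHm.aemeasurable
  refine ⟨y, hy, ?_⟩
  have hHB : ∫⁻ y in B, H y ≤ 2 ^ N * (volume B + volume U) * ∫⁻ x, F x := by
    rw [hH, lintegral_lintegral_swap hm1.aemeasurable]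
    calc _ ≤ ∫⁻ t in Ioc (0 : ℝ) 1, 2 ^ N * (volume B + volume U) * ∫⁻ x, F x :=
          lintegral_mono fun t => double_bound F hF B U t
      _ = _ := by rw [setLIntegral_const]; simp
  calc ∫⁻ x in U, ‖v x - taylorPoly n v y x‖ₑ
      ≤ ∫⁻ x in U, ENNReal.ofReal (h ^ (n + 1)) * ∫⁻ t in Ioc (0 : ℝ) 1, F (y + t • (x - y)) := by
        refine setLIntegral_mono' hU fun x hx => ?_
        refine (taylor_pointwise n v hv h x y (hd x hx y hy)).trans ?_
        refine mul_le_mul' le_rfl ?_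
        refine setLIntegral_mono' measurableSet_Ioc fun t ht => ?_
        have : y + t • (x - y) ∈ U := by
          apply hstar y hy x hx
          rw [segment_eq_image']
          exact ⟨t, ⟨ht.1.le, ht.2⟩, rfl⟩
        rw [hFdef, indicator_of_mem this]
    _ = ENNReal.ofReal (h ^ (n + 1)) * H y := by
        rw [lintegral_const_mul' _ _ ENNReal.ofReal_ne_top, hH]
        congr 1
        rw [lintegral_lintegral_swap]
        apply Measurable.aemeasurable
        fun_prop
    _ ≤ _ := by
        gcongr
        refine hle.trans ?_
        rw [setLAverage_eq, ← hFi]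
        gcongr

open scoped Manifold Topology ContDiff in
lemma exists_extension {N : ℕ} (U V : Set (EuclideanSpace ℝ (Fin N))) (hV : IsOpen V)
    (hUV : closure U ⊆ V) (v : EuclideanSpace ℝ (Fin N) → ℝ)
    (hv : ContDiffOn ℝ (⊤ : ℕ∞) v V) :
    ∃ v' : EuclideanSpace ℝ (Fin N) → ℝ, ContDiff ℝ (⊤ : ℕ∞) v' ∧ EqOn v' v U := by
  obtain ⟨f, h0, h1, -⟩ := exists_contMDiffMap_zero_one_nhds_of_isClosed
    (n := (⊤ : ℕ∞)) 𝓘(ℝ, EuclideanSpace ℝ (Fin N))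
    (s := Vᶜ) (t := closure U) hV.isClosed_compl isClosed_closure
    (disjoint_compl_left_iff_subset.mpr hUV)
  have hf : ContDiff ℝ (⊤ : ℕ∞) f := f.contMDiff.contDiff
  refine ⟨fun x => f x * v x, ?_, ?_⟩
  · rw [contDiff_iff_contDiffAt]
    intro x
    by_cases hx : x ∈ V
    · exact hf.contDiffAt.mul (hv.contDiffAt (hV.mem_nhds hx))
    · have h2 : ∀ᶠ z in 𝓝 x, f z = 0 := eventually_nhdsSet_iff_forall.mp h0 x hx
      refine (contDiffAt_const (c := (0 : ℝ))).congr_of_eventuallyEq ?_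
      filter_upwards [h2] with z hz
      simp [hz]
  · intro x hx
    have := h1.self_of_nhdsSet x (subset_closure hx)
    simp [this]

lemma final_arith (N s : ℕ) (ρ h C1 ω : ℝ) (hρ : 0 < ρ) (hh : 0 < h) (hC1 : 0 < C1) (hω : 0 < ω)
    (a b : ℝ) (hab : a + b = 1) (μ β S G Φ : ℝ≥0∞) (hμ0 : μ ≠ 0)
    (hβ : β = ENNReal.ofReal ((ρ * h) ^ N * ω)) (hμ : μ ≤ ENNReal.ofReal (h ^ N * ω))
    (hΦ : Φ ≤ S * μ ^ b)
    (hG : G ≤ ENNReal.ofReal (h ^ s) * (2 ^ N * (β + μ) * Φ / β)) :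
    μ ^ a * (ENNReal.ofReal (C1 * (h ^ s)⁻¹ * (h ^ N)⁻¹) * G) ≤
      ENNReal.ofReal (C1 * 2 ^ N * (1 + (ρ ^ N)⁻¹) * ω) * S := by
  have hμt : μ ≠ ⊤ := ne_top_of_le_ne_top ENNReal.ofReal_ne_top hμ
  have hβ0 : β ≠ 0 := by
    rw [hβ]; simp only [ne_eq, ENNReal.ofReal_eq_zero, not_le]; positivity
  have hβt : β ≠ ⊤ := by rw [hβ]; exact ENNReal.ofReal_ne_top
  have hμβ : μ ≤ ENNReal.ofReal ((ρ ^ N)⁻¹) * β := by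
    refine hμ.trans (le_of_eq ?_)
    rw [hβ, ← ENNReal.ofReal_mul (by positivity)]
    congr 1
    rw [mul_pow]
    field_simp
  have h1 : (β + μ) / β ≤ ENNReal.ofReal (1 + (ρ ^ N)⁻¹) := by
    apply ENNReal.div_le_of_le_mul
    rw [ENNReal.ofReal_add zero_le_one (by positivity), add_mul, ENNReal.ofReal_one, one_mul]
    gcongr
  have h2 : (2 : ℝ≥0∞) ^ N = ENNReal.ofReal (2 ^ N) := by
    rw [ENNReal.ofReal_pow (by norm_num)]; simp
  have hG' : G ≤ ENNReal.ofReal (h ^ s) * (2 ^ N * ENNReal.ofReal (1 + (ρ ^ N)⁻¹) * (S * μ ^ b)) := by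
    refine hG.trans ?_
    have : 2 ^ N * (β + μ) * Φ / β = 2 ^ N * ((β + μ) / β) * Φ := by
      simp only [div_eq_mul_inv]; ring
    rw [this]
    gcongr
  have hμμ : μ ^ a * μ ^ b = μ := by
    rw [← ENNReal.rpow_add _ _ hμ0 hμt, hab, ENNReal.rpow_one]
  calc μ ^ a * (ENNReal.ofReal (C1 * (h ^ s)⁻¹ * (h ^ N)⁻¹) * G)
      ≤ μ ^ a * (ENNReal.ofReal (C1 * (h ^ s)⁻¹ * (h ^ N)⁻¹) * (ENNReal.ofReal (h ^ s) *
        (2 ^ N * ENNReal.ofReal (1 + (ρ ^ N)⁻¹) * (S * μ ^ b)))) := by gcongr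
    _ = (ENNReal.ofReal (C1 * (h ^ s)⁻¹ * (h ^ N)⁻¹) * ENNReal.ofReal (h ^ s) *
        2 ^ N * ENNReal.ofReal (1 + (ρ ^ N)⁻¹)) * (μ ^ a * μ ^ b) * S := by ring
    _ ≤ (ENNReal.ofReal (C1 * (h ^ s)⁻¹ * (h ^ N)⁻¹) * ENNReal.ofReal (h ^ s) *
        2 ^ N * ENNReal.ofReal (1 + (ρ ^ N)⁻¹)) * ENNReal.ofReal (h ^ N * ω) * S := by
        rw [hμμ]; gcongr
    _ = _ := by
        rw [h2, ← ENNReal.ofReal_mul (by positivity), ← ENNReal.ofReal_mul (by positivity),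
          ← ENNReal.ofReal_mul (by positivity), ← ENNReal.ofReal_mul (by positivity)]
        congr 2
        field_simp

/-- $W^{s,p}$-stability of $L^2$-projections on local polynomial spaces. -/
theorem wsp_stability_of_l2_projection
    (N k : ℕ) (hN : 1 ≤ N) (s : ℕ) (hs : 1 ≤ s) (hsk : s ≤ k + 1)
    (p : ℝ≥0∞) (hp : 1 ≤ p) (ρ : ℝ) (hρ : 0 < ρ) :
    ∃ C : ℝ, 0 < C ∧
      ∀ U : Set (EuclideanSpace ℝ (Fin N)),
        IsOpen U → Bornology.IsBounded U → StarShapedWrtBall ρ U →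
        ∀ v : EuclideanSpace ℝ (Fin N) → ℝ,
          (∃ V, IsOpen V ∧ closure U ⊆ V ∧ ContDiffOn ℝ (⊤ : ℕ∞) v V) →
        ∀ P : EuclideanSpace ℝ (Fin N) → ℝ, IsPolyDegLE N k P →
          (∀ q : EuclideanSpace ℝ (Fin N) → ℝ, IsPolyDegLE N k q →
            ∫ x in U, P x * q x = ∫ x in U, v x * q x) →
          sobSemi s p U P ≤ ENNReal.ofReal C * sobSemi s p U v := by
  obtain ⟨n, rfl⟩ : ∃ n, s = n + 1 := ⟨s - 1, by omega⟩
  obtain ⟨C1, hC1, hproj⟩ := proj_bound N k (n + 1) ρ hρ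
  have : Nonempty (Fin N) := ⟨⟨0, hN⟩⟩
  set ω : ℝ := (volume (ball (0 : EuclideanSpace ℝ (Fin N)) 1)).toReal with hω
  have hω0 : 0 < ω := ENNReal.toReal_pos (measure_ball_pos _ _ one_pos).ne' measure_ball_lt_top.ne
  have hωe : volume (ball (0 : EuclideanSpace ℝ (Fin N)) 1) = ENNReal.ofReal ω :=
    (ENNReal.ofReal_toReal measure_ball_lt_top.ne).symm
  refine ⟨C1 * 2 ^ N * (1 + (ρ ^ N)⁻¹) * ω, by positivity, ?_⟩
  rintro U hUo hUb ⟨c, hBU, hstar⟩ v ⟨V, hVo, hUV, hvV⟩ P hP hPv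
  rcases U.eq_empty_or_nonempty with rfl | hUne
  · simp [sobSemi]
  obtain ⟨v', hv', hvv⟩ := exists_extension U V hVo hUV v hvV
  set h := diam U with hh
  have hμ0 : volume U ≠ 0 := (hUo.measure_pos volume hUne).ne'
  have hh0 : 0 < h := by
    apply diam_pos _ hUb
    by_contra hnt
    exact hμ0 ((not_nontrivial_iff.mp hnt).measure_zero volume)
  have hcU : c ∈ U := hBU (mem_ball_self (by positivity))
  have hUB : U ⊆ closedBall c h := fun x hx => dist_le_diam_of_mem hUb hx hcU
  have hβ : volume (ball c (ρ * h)) = ENNReal.ofReal ((ρ * h) ^ N * ω) := by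
    rw [Measure.addHaar_ball volume c (by positivity), hωe, finrank_euclideanSpace, Fintype.card_fin,
      ENNReal.ofReal_mul (by positivity)]
  have hμ : volume U ≤ ENNReal.ofReal (h ^ N * ω) := by
    refine (measure_mono hUB).trans (le_of_eq ?_)
    rw [Measure.addHaar_closedBall volume c hh0.le, hωe, finrank_euclideanSpace, Fintype.card_fin,
      ENNReal.ofReal_mul (by positivity)]
  have hcd : ContDiff ℝ ((n : WithTop ℕ∞) + 1) v' := by
    have := hv'.of_le (m := ((n + 1 : ℕ) : WithTop ℕ∞)) (by exact_mod_cast le_top)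
    exact_mod_cast this
  obtain ⟨y, hy, hT⟩ := taylor_L1 n v' hcd h (ball c (ρ * h)) U hUo.measurableSet
    (by rw [hβ]; simp only [ne_eq, ENNReal.ofReal_eq_zero, not_le]; positivity)
    (by rw [hβ]; exact ENNReal.ofReal_ne_top)
    (fun x hx y hy => dist_le_diam_of_mem hUb hx (hBU hy)) hstar
  set w := taylorPoly n v' y with hw
  have hwp : IsPolyDegLE N k w := isPoly_mono (by omega) (taylorPoly_isPoly n v' y)
  have hqp : IsPolyDegLE N k (fun x => P x - w x) := isPoly_sub hP hwp
  have hPc : Continuous P := (isPoly_contDiff (n := 0) hP).continuous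
  have hwc : Continuous w := (isPoly_contDiff (n := 0) hwp).continuous
  have hv'c : Continuous v' := hv'.continuous
  have hint : ∀ f : EuclideanSpace ℝ (Fin N) → ℝ, Continuous f → IntegrableOn f U := fun f hf =>
    (hf.continuousOn.integrableOn_compact (isCompact_closedBall c h)).mono_set hUB
  have horth : ∫ x in U, (P x - w x) * (P x - w x) = ∫ x in U, (v' x - w x) * (P x - w x) := by
    have h1 := hPv _ hqp
    have h2 : ∫ x in U, v x * (P x - w x) = ∫ x in U, v' x * (P x - w x) :=
      setIntegral_congr_fun hUo.measurableSet fun x hx => by simp only [hvv hx]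
    rw [h2] at h1
    simp only [sub_mul (P _) (w _) (P _ - w _), sub_mul (v' _) (w _) (P _ - w _)]
    rw [integral_sub (hint _ (by fun_prop)) (hint _ (by fun_prop)),
      integral_sub (hint _ (by fun_prop)) (hint _ (by fun_prop)), h1]
  have hder := hproj c h hh0 U hUo.measurableSet hBU hUB _ hqp (fun x => v' x - w x)
    (hint _ (by fun_prop)) horth
  have hDP : ∀ x, iteratedFDeriv ℝ (n + 1) (fun x => P x - w x) x = iteratedFDeriv ℝ (n + 1) P x := by
    intro x
    have := iteratedFDeriv_sub_apply (𝕜 := ℝ) (i := n + 1) (x := x)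
      (isPoly_contDiff hP).contDiffAt (isPoly_contDiff hwp).contDiffAt
    refine this.trans ?_
    rw [hw, taylorPoly_iteratedFDeriv]
    simp
  have hDv : ∀ x ∈ U, iteratedFDeriv ℝ (n + 1) v' x = iteratedFDeriv ℝ (n + 1) v x := by
    intro x hx
    apply Filter.EventuallyEq.eq_of_nhds
    apply Filter.EventuallyEq.iteratedFDeriv
    filter_upwards [hUo.mem_nhds hx] with z hz using hvv hz
  have hsob : sobSemi (n + 1) p U v =
      eLpNorm (fun x => iteratedFDeriv ℝ (n + 1) v' x) p (volume.restrict U) := by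
    unfold sobSemi
    rw [eLpNorm_norm]
    apply eLpNorm_congr_ae
    filter_upwards [ae_restrict_mem hUo.measurableSet] with x hx using (hDv x hx).symm
  have hDc : Continuous (iteratedFDeriv ℝ (n + 1) v') :=
    hcd.continuous_iteratedFDeriv (by norm_cast)
  have hΦ : ∫⁻ x in U, ‖iteratedFDeriv ℝ (n + 1) v' x‖ₑ ≤
      sobSemi (n + 1) p U v * volume U ^ (1 / (1 : ℝ≥0∞).toReal - 1 / p.toReal) := by
    rw [hsob, ← eLpNorm_one_eq_lintegral_enorm]
    have := eLpNorm_le_eLpNorm_mul_rpow_measure_univ (μ := volume.restrict U) hp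
      hDc.aestronglyMeasurable
    simpa only [Measure.restrict_apply_univ] using this
  have hfin := final_arith N (n + 1) ρ h C1 ω hρ hh0 hC1 hω0 p.toReal⁻¹
    (1 / (1 : ℝ≥0∞).toReal - 1 / p.toReal) (by simp) (volume U) (volume (ball c (ρ * h)))
    (sobSemi (n + 1) p U v) _ _ hμ0 hβ hμ hΦ hT
  refine le_trans ?_ hfin
  have hb := eLpNorm_le_of_ae_bound (p := p) (μ := volume.restrict U)
    (f := fun x => ‖iteratedFDeriv ℝ (n + 1) P x‖)
    (C := C1 * (h ^ (n + 1))⁻¹ * (h ^ N)⁻¹ * ∫ x in U, ‖v' x - w x‖) (by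
      filter_upwards [ae_restrict_mem hUo.measurableSet] with x hx
      rw [norm_norm, ← hDP]
      exact hder x hx)
  rw [Measure.restrict_apply_univ, ENNReal.ofReal_mul (by positivity),
    ofReal_integral_norm_eq_lintegral_enorm (hint _ (by fun_prop))] at hb
  exact hb
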